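/- arXiv:0706.0615 — 6 statements merged into one kernel-verified Lean document; each statement's English description precedes it below -/
import Mathlib

section
/- Let U : ℝ⁴ → ℝ be defined by U(x) = −4·log(1 + ‖x‖²/(8√6)). Then U is smooth on ℝ⁴ and satisfies the fourth-order Liouville equation Δ(ΔU)(x) = exp(U(x)) for every x ∈ ℝ⁴. -/
noncomputable section

/-- The Laplacian of `f : ℝ⁴ → ℝ` at `x`: the trace of the second derivative. -/
def lap (f : EuclideanSpace ℝ (Fin 4) → ℝ) (x : EuclideanSpace ℝ (Fin 4)) : ℝ :=
  ∑ i : Fin 4,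
    fderiv ℝ (fun y => fderiv ℝ f y (EuclideanSpace.single i (1:ℝ))) x
      (EuclideanSpace.single i (1:ℝ))

open InnerProductSpace Laplacian Filter Topology
open Module (finrank)

/-! For a radial function, `Δ (φ(‖x‖²)) = 4 ‖x‖² φ''(‖x‖²) + 2 n φ'(‖x‖²)`, where `n` is the
dimension. Writing `r = c + ‖x‖²`, this expresses `Δ (log r)` and `Δ (r ^ p)` by powers of `r`, and
in `Δ² (log r)` the coefficients of `r⁻²` and `r⁻³` both carry the factor `n - 4`. In dimension four
only `-96 c² r⁻⁴` survives, a multiple of `exp (-4 log r)`; the scale `c = 8√6`, for which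
`c² = 384`, normalises the equation. -/

theorem contDiff_laplacian {E F : Type*} [NormedAddCommGroup E] [InnerProductSpace ℝ E]
    [FiniteDimensional ℝ E] [NormedAddCommGroup F] [NormedSpace ℝ F] {f : E → F}
    {n : WithTop ℕ∞} (hf : ContDiff ℝ (n + 2) f) : ContDiff ℝ n (Δ f) := by
  rw [laplacian_eq_iteratedFDeriv_stdOrthonormalBasis]
  exact ContDiff.sum fun i _ =>
    (ContinuousMultilinearMap.apply ℝ (fun _ : Fin 2 => E) F _).contDiff.comp
      (hf.iteratedFDeriv_right le_rfl)

section RadialFunctions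

variable {E F : Type*} [NormedAddCommGroup E] [InnerProductSpace ℝ E]
  [NormedAddCommGroup F] [NormedSpace ℝ F]

theorem hasFDerivAt_comp_norm_sq {φ : ℝ → F} {a : F} {x : E} (hφ : HasDerivAt φ a (‖x‖ ^ 2)) :
    HasFDerivAt (fun y : E => φ (‖y‖ ^ 2)) (((2 : ℝ) • innerSL ℝ x).smulRight a) x := by
  refine (hφ.hasFDerivAt.comp x (hasStrictFDerivAt_norm_sq x).hasFDerivAt).congr_fderiv ?_
  ext v
  simp [two_smul, add_smul]

theorem fderiv_fderiv_comp_norm_sq {φ φ' : ℝ → F} {b : F} {x : E}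
    (hφ : ∀ᶠ s in 𝓝 (‖x‖ ^ 2), HasDerivAt φ (φ' s) s) (hφ' : HasDerivAt φ' b (‖x‖ ^ 2))
    (v w : E) :
    fderiv ℝ (fderiv ℝ fun y : E => φ (‖y‖ ^ 2)) x v w =
      (4 * inner ℝ x v * inner ℝ x w) • b + (2 * inner ℝ v w) • φ' (‖x‖ ^ 2) := by
  have hfirst : fderiv ℝ (fun y : E => φ (‖y‖ ^ 2)) =ᶠ[𝓝 x]
      fun y => ((2 : ℝ) • innerSL ℝ y).smulRight (φ' (‖y‖ ^ 2)) := by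
    have hcont : Tendsto (fun y : E => ‖y‖ ^ 2) (𝓝 x) (𝓝 (‖x‖ ^ 2)) :=
      (continuous_norm.pow 2).continuousAt
    filter_upwards [hcont.eventually hφ] with y hy
    exact (hasFDerivAt_comp_norm_sq hy).fderiv
  have hsecond := (ContinuousLinearMap.smulRightL ℝ E F).hasFDerivAt_of_bilinear
    ((2 : ℝ) • innerSL ℝ (E := E)).hasFDerivAt (hasFDerivAt_comp_norm_sq hφ')
  have hfderiv := (hsecond.congr_of_eventuallyEq hfirst).fderiv
  rw [hfderiv]
  -- The product rule: first `φ'` is differentiated in direction `v`, then `y ↦ 2⟪y, ·⟫` is.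
  change (2 * inner ℝ x w) • (2 * inner ℝ x v) • b + (2 * inner ℝ v w) • φ' (‖x‖ ^ 2) = _
  module

variable [FiniteDimensional ℝ E]

theorem laplacian_comp_norm_sq {φ φ' : ℝ → F} {b : F} {x : E}
    (hφ : ∀ᶠ s in 𝓝 (‖x‖ ^ 2), HasDerivAt φ (φ' s) s) (hφ' : HasDerivAt φ' b (‖x‖ ^ 2)) :
    Δ (fun y : E => φ (‖y‖ ^ 2)) x =
      (4 * ‖x‖ ^ 2) • b + (2 * finrank ℝ E : ℝ) • φ' (‖x‖ ^ 2) := by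
  let e := stdOrthonormalBasis ℝ E
  calc Δ (fun y : E => φ (‖y‖ ^ 2)) x
      = ∑ i, ((4 * inner ℝ x (e i) ^ 2) • b + (2 : ℝ) • φ' (‖x‖ ^ 2)) := by
        rw [laplacian_eq_iteratedFDeriv_orthonormalBasis _ e]
        refine Finset.sum_congr rfl fun i _ => ?_
        rw [iteratedFDeriv_two_apply, fderiv_fderiv_comp_norm_sq hφ hφ']
        simp [sq, mul_assoc]
    _ = (4 * ‖x‖ ^ 2) • b + (2 * finrank ℝ E : ℝ) • φ' (‖x‖ ^ 2) := by
        rw [Finset.sum_add_distrib, ← Finset.sum_smul, ← Finset.mul_sum, e.sum_sq_inner_left]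
        simp only [Finset.sum_const, Finset.card_univ, Fintype.card_fin]
        module

theorem laplacian_rpow_add_norm_sq {c : ℝ} {x : E} (hx : c + ‖x‖ ^ 2 ≠ 0) (p : ℝ) :
    Δ (fun y : E => (c + ‖y‖ ^ 2) ^ p) x =
      2 * p * (finrank ℝ E + 2 * (p - 1)) * (c + ‖x‖ ^ 2) ^ (p - 1)
        - 4 * c * p * (p - 1) * (c + ‖x‖ ^ 2) ^ (p - 2) := by
  have hderiv (q : ℝ) {s : ℝ} (hs : c + s ≠ 0) :
      HasDerivAt (fun t => (c + t) ^ q) (q * (c + s) ^ (q - 1)) s :=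
    (Real.hasDerivAt_rpow_const (.inl hs)).comp_const_add c s
  have hne : ∀ᶠ s in 𝓝 (‖x‖ ^ 2), c + s ≠ 0 :=
    (continuous_const_add c).continuousAt.eventually_ne hx
  have hpow : (c + ‖x‖ ^ 2) ^ (p - 1) = (c + ‖x‖ ^ 2) ^ (p - 2) * (c + ‖x‖ ^ 2) := by
    rw [← Real.rpow_add_one hx]
    ring_nf
  rw [laplacian_comp_norm_sq (hne.mono fun _ => hderiv p) ((hderiv (p - 1) hx).const_mul p),
    smul_eq_mul, smul_eq_mul, show p - 1 - 1 = p - 2 by ring, hpow]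
  ring

theorem laplacian_log_add_norm_sq {c : ℝ} {x : E} (hx : c + ‖x‖ ^ 2 ≠ 0) :
    Δ (fun y : E => Real.log (c + ‖y‖ ^ 2)) x =
      2 * (finrank ℝ E - 2) * (c + ‖x‖ ^ 2) ^ (-1 : ℝ) + 4 * c * (c + ‖x‖ ^ 2) ^ (-2 : ℝ) := by
  have hlog {s : ℝ} (hs : c + s ≠ 0) : HasDerivAt (fun t => Real.log (c + t)) (c + s)⁻¹ s :=
    (Real.hasDerivAt_log hs).comp_const_add c s
  have hinv : HasDerivAt (fun t => (c + t)⁻¹) (-((c + ‖x‖ ^ 2) ^ 2)⁻¹) (‖x‖ ^ 2) :=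
    (hasDerivAt_inv hx).comp_const_add c _
  have hne : ∀ᶠ s in 𝓝 (‖x‖ ^ 2), c + s ≠ 0 :=
    (continuous_const_add c).continuousAt.eventually_ne hx
  rw [laplacian_comp_norm_sq (hne.mono fun _ => hlog) hinv, smul_eq_mul, smul_eq_mul,
    Real.rpow_neg_one, show (-2 : ℝ) = (-2 : ℤ) by norm_num, Real.rpow_intCast]
  field_simp
  ring

theorem laplacian_laplacian_log_add_norm_sq {c : ℝ} {x : E} (hx : c + ‖x‖ ^ 2 ≠ 0) :
    Δ (Δ fun y : E => Real.log (c + ‖y‖ ^ 2)) x =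
      -4 * (finrank ℝ E - 2) * (finrank ℝ E - 4) * (c + ‖x‖ ^ 2) ^ (-2 : ℝ)
        - 32 * c * (finrank ℝ E - 4) * (c + ‖x‖ ^ 2) ^ (-3 : ℝ)
        - 96 * c ^ 2 * (c + ‖x‖ ^ 2) ^ (-4 : ℝ) := by
  have hlap : Δ (fun y : E => Real.log (c + ‖y‖ ^ 2)) =ᶠ[𝓝 x]
      (2 * (finrank ℝ E - 2) : ℝ) • (fun y : E => (c + ‖y‖ ^ 2) ^ (-1 : ℝ))
        + (4 * c) • fun y : E => (c + ‖y‖ ^ 2) ^ (-2 : ℝ) := by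
    have hcont : ContinuousAt (fun y : E => c + ‖y‖ ^ 2) x := by fun_prop
    filter_upwards [hcont.eventually_ne hx] with y hy
    exact laplacian_log_add_norm_sq hy
  have hsmooth (p : ℝ) : ContDiffAt ℝ 2 (fun y : E => (c + ‖y‖ ^ 2) ^ p) x :=
    (contDiff_const.add (contDiff_norm_sq ℝ)).contDiffAt.rpow_const_of_ne hx
  have hterm (a p : ℝ) : ContDiffAt ℝ 2 (a • fun y : E => (c + ‖y‖ ^ 2) ^ p) x :=
    (hsmooth p).const_smul a
  rw [(laplacian_congr_nhds hlap).eq_of_nhds,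
    (hterm _ _).laplacian_add (hterm _ _),
    laplacian_smul _ (hsmooth _), laplacian_smul _ (hsmooth _),
    laplacian_rpow_add_norm_sq hx, laplacian_rpow_add_norm_sq hx]
  ring_nf

end RadialFunctions

section Bubble

variable {E : Type*} [NormedAddCommGroup E] {c : ℝ}

/-- The spherical bubble `-4 log (1 + ‖x‖² / c)`, a radial solution of the Liouville equation in
dimension four. The parameter `c` is the square of its length scale. -/
def bubble (c : ℝ) (x : E) : ℝ :=
  -4 * Real.log (1 + ‖x‖ ^ 2 / c)

theorem bubble_eq_log_add_norm_sq (hc : 0 < c) (x : E) :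
    bubble c x = -4 * Real.log (c + ‖x‖ ^ 2) + 4 * Real.log c := by
  have hratio : 1 + ‖x‖ ^ 2 / c = (c + ‖x‖ ^ 2) / c := by field_simp
  rw [bubble, hratio, Real.log_div (by positivity) hc.ne']
  ring

theorem exp_bubble (hc : 0 < c) (x : E) :
    Real.exp (bubble c x) = c ^ 4 * (c + ‖x‖ ^ 2) ^ (-4 : ℝ) := by
  rw [bubble_eq_log_add_norm_sq hc, Real.exp_add, Real.rpow_def_of_pos (by positivity),
    ← Nat.cast_ofNat (n := 4), Real.exp_nat_mul, Real.exp_log hc]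
  ring_nf

variable [InnerProductSpace ℝ E]

theorem contDiff_log_add_norm_sq (hc : 0 < c) {n : WithTop ℕ∞} :
    ContDiff ℝ n fun x : E => Real.log (c + ‖x‖ ^ 2) :=
  (contDiff_const.add (contDiff_norm_sq ℝ)).log fun _ => by positivity

theorem contDiff_bubble (hc : 0 < c) {n : WithTop ℕ∞} : ContDiff ℝ n (bubble c : E → ℝ) :=
  contDiff_const.mul <| (contDiff_const.add ((contDiff_norm_sq ℝ).div_const c)).log
    fun _ => by positivity

variable [FiniteDimensional ℝ E]

theorem laplacian_bubble (hc : 0 < c) :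
    Δ (bubble c : E → ℝ) = (-4 : ℝ) • Δ fun x : E => Real.log (c + ‖x‖ ^ 2) := by
  have hlog : ContDiff ℝ 2 fun x : E => Real.log (c + ‖x‖ ^ 2) := contDiff_log_add_norm_sq hc
  have hbubble : (bubble c : E → ℝ) =
      (-4 : ℝ) • (fun x : E => Real.log (c + ‖x‖ ^ 2)) + fun _ => 4 * Real.log c :=
    funext (bubble_eq_log_add_norm_sq hc)
  have hterm : ContDiff ℝ 2 ((-4 : ℝ) • fun x : E => Real.log (c + ‖x‖ ^ 2)) :=
    contDiff_const.smul hlog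
  funext x
  rw [hbubble, hterm.contDiffAt.laplacian_add contDiffAt_const, laplacian_const,
    laplacian_smul _ hlog.contDiffAt]
  simp

theorem laplacian_laplacian_bubble (hE : finrank ℝ E = 4) (hc : 0 < c) (x : E) :
    Δ (Δ (bubble c : E → ℝ)) x = 384 / c ^ 2 * Real.exp (bubble c x) := by
  have hx : c + ‖x‖ ^ 2 ≠ 0 := by positivity
  have hdim : (finrank ℝ E : ℝ) - 4 = 0 := by simp [hE]
  have hΔ : ContDiff ℝ 2 (Δ fun x : E => Real.log (c + ‖x‖ ^ 2)) :=
    contDiff_laplacian (contDiff_log_add_norm_sq hc)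
  rw [laplacian_bubble hc, laplacian_smul _ hΔ.contDiffAt, laplacian_laplacian_log_add_norm_sq hx,
    exp_bubble hc, hdim, smul_eq_mul]
  field_simp
  ring

theorem bubble_smooth_and_solves_general (hE : finrank ℝ E = 4) (hc : 0 < c) :
    ContDiff ℝ (⊤ : ℕ∞) (bubble c : E → ℝ) ∧
      ∀ x : E, Δ (Δ (bubble c : E → ℝ)) x = 384 / c ^ 2 * Real.exp (bubble c x) :=
  ⟨contDiff_bubble hc, laplacian_laplacian_bubble hE hc⟩

end Bubble

theorem lap_eq_laplacian_of_differentiableAt {f : EuclideanSpace ℝ (Fin 4) → ℝ}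
    {x : EuclideanSpace ℝ (Fin 4)} (hf : DifferentiableAt ℝ (fderiv ℝ f) x) :
    lap f x = Δ f x := by
  rw [laplacian_eq_iteratedFDeriv_orthonormalBasis f (EuclideanSpace.basisFun (Fin 4) ℝ)]
  refine Finset.sum_congr rfl fun i _ => ?_
  rw [fderiv_clm_apply hf (differentiableAt_const _), iteratedFDeriv_two_apply]
  simp

theorem lap_eq_laplacian {f : EuclideanSpace ℝ (Fin 4) → ℝ} (hf : ContDiff ℝ 2 f) :
    lap f = Δ f :=
  funext fun x => lap_eq_laplacian_of_differentiableAt <|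
    (hf.fderiv_right (m := 1) (by norm_num)).differentiable (by norm_num) x

theorem lap_lap_eq_laplacian_laplacian {f : EuclideanSpace ℝ (Fin 4) → ℝ} (hf : ContDiff ℝ 4 f) :
    lap (lap f) = Δ (Δ f) := by
  rw [lap_eq_laplacian (hf.of_le (by norm_num)), lap_eq_laplacian (contDiff_laplacian hf)]

/-- The standard bubble `U(x) = −4 log(1 + ‖x‖²/(8√6))` is smooth on `ℝ⁴` and solves the
fourth-order Liouville equation `Δ²U = e^U`. -/
theorem bubble_smooth_and_solves :
    ContDiff ℝ (⊤ : ℕ∞)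
      (fun x : EuclideanSpace ℝ (Fin 4) =>
        -4 * Real.log (1 + ‖x‖ ^ 2 / (8 * Real.sqrt 6))) ∧
    ∀ x : EuclideanSpace ℝ (Fin 4),
      lap (lap (fun x : EuclideanSpace ℝ (Fin 4) =>
          -4 * Real.log (1 + ‖x‖ ^ 2 / (8 * Real.sqrt 6)))) x
        = Real.exp (-4 * Real.log (1 + ‖x‖ ^ 2 / (8 * Real.sqrt 6))) := by
  have hc : 0 < 8 * Real.sqrt 6 := by positivity
  have hc_sq : (8 * Real.sqrt 6) ^ 2 = 384 := by
    rw [mul_pow, Real.sq_sqrt (by norm_num)]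
    norm_num
  obtain ⟨hsmooth, hsolves⟩ := bubble_smooth_and_solves_general finrank_euclideanSpace_fin hc
  refine ⟨hsmooth, fun x => ?_⟩
  change lap (lap (bubble _)) x = Real.exp (bubble _ x)
  rw [lap_lap_eq_laplacian_laplacian (contDiff_bubble hc), hsolves, hc_sq, div_self (by simp),
    one_mul]

end
end

section
/- Let B be the open unit ball of ℝ⁴. For any two distinct points x, y ∈ B, Boggio's Green function satisfies G(x, y) > 0. -/
open Metric

noncomputable section

/-- Boggio's auxiliary quantity `[x,y] = √(‖x−y‖² + (1−‖x‖²)(1−‖y‖²))`. -/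
def brkt (x y : EuclideanSpace ℝ (Fin 4)) : ℝ :=
  Real.sqrt (‖x - y‖ ^ 2 + (1 - ‖x‖ ^ 2) * (1 - ‖y‖ ^ 2))

/-- Boggio's Green function of the bilaplacian with Dirichlet boundary conditions on the
unit ball of `ℝ⁴`: `G(x,y) = (1/(8π²)) ∫₁^{[x,y]/‖x−y‖} (v²−1)/v³ dv`. -/
def boggioG (x y : EuclideanSpace ℝ (Fin 4)) : ℝ :=
  (1 / (8 * Real.pi ^ 2)) * ∫ v in (1:ℝ)..(brkt x y / ‖x - y‖), (v ^ 2 - 1) / v ^ 3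

/-!
The integrand of Boggio's formula is positive on `(1, ∞)`, so everything depends on the upper
limit `[x,y] / ‖x - y‖` exceeding `1`. Since `[x,y]² - ‖x - y‖² = (1 - ‖x‖²)(1 - ‖y‖²)`, this
happens exactly when `x` and `y` lie strictly on the same side of the unit sphere. The argument
is insensitive to the dimension and to the order of the operator.
-/

open MeasureTheory
open scoped Nat

theorem integral_sq_sub_one_pow_mul_zpow_pos (m : ℕ) (k : ℤ) {b : ℝ} (hb : 1 < b) :
    0 < ∫ v in (1 : ℝ)..b, (v ^ 2 - 1) ^ m * v ^ k := by
  have hcont : ContinuousOn (fun v : ℝ ↦ (v ^ 2 - 1) ^ m * v ^ k) (Set.uIcc 1 b) := by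
    rw [Set.uIcc_of_le hb.le]
    exact ContinuousOn.mul (by fun_prop)
      (continuousOn_id.zpow₀ k fun v hv ↦ Or.inl (zero_lt_one.trans_le hv.1).ne')
  refine intervalIntegral.intervalIntegral_pos_of_pos_on hcont.intervalIntegrable
    (fun v hv ↦ ?_) hb
  have hv_sq : 0 < v ^ 2 - 1 := sub_pos.mpr (one_lt_pow₀ hv.1 two_ne_zero)
  have hv_pos : 0 < v := zero_lt_one.trans hv.1
  positivity

section Bracket

variable {E : Type*} [SeminormedAddCommGroup E] {x y : E}

/-- Boggio's `[x,y]` in any seminormed group; divided by `‖x - y‖` it is the upper limit of the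
integral in Boggio's formula. For `y ≠ 0` in an inner product space it is `‖y‖` times the
distance from `x` to the mirror image `y / ‖y‖²` of `y` in the unit sphere. -/
def boggioBracket (x y : E) : ℝ :=
  √(‖x - y‖ ^ 2 + (1 - ‖x‖ ^ 2) * (1 - ‖y‖ ^ 2))

theorem norm_sub_lt_boggioBracket (hside : 0 < (1 - ‖x‖ ^ 2) * (1 - ‖y‖ ^ 2)) :
    ‖x - y‖ < boggioBracket x y :=
  Real.lt_sqrt_of_sq_lt (lt_add_of_pos_right _ hside)

theorem one_sub_norm_sq_pos_of_mem_ball (hx : x ∈ ball (0 : E) 1) : 0 < 1 - ‖x‖ ^ 2 :=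
  sub_pos.mpr (pow_lt_one₀ (norm_nonneg x) (mem_ball_zero_iff.mp hx) two_ne_zero)

end Bracket

/-- Boggio's Green function of `(-Δ)^(m + 1)` with Dirichlet boundary conditions on the unit ball
of `ℝⁿ`. The order is indexed by `m + 1` so that the exponents of `v² - 1` and `4` are natural
numbers. In the normalising constant, `n * volume.real (ball 0 1)` is the area of the unit
sphere. -/
def polyharmonicGreen (m : ℕ) {n : ℕ} (x y : EuclideanSpace ℝ (Fin n)) : ℝ :=
  1 / (n * volume.real (ball (0 : EuclideanSpace ℝ (Fin n)) 1) * 4 ^ m * (m ! : ℝ) ^ 2) *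
    ‖x - y‖ ^ (2 * (m + 1) - n : ℤ) *
    ∫ v in (1 : ℝ)..boggioBracket x y / ‖x - y‖, (v ^ 2 - 1) ^ m * v ^ (1 - n : ℤ)

theorem boggioG_eq_polyharmonicGreen (x y : EuclideanSpace ℝ (Fin 4)) :
    boggioG x y = polyharmonicGreen 1 x y := by
  have hvol : volume.real (ball (0 : EuclideanSpace ℝ (Fin 4)) 1) = Real.pi ^ 2 / 2 := by
    rw [measureReal_def, InnerProductSpace.volume_ball_of_dim_even (k := 2) (by simp)]
    simp [Real.pi_nonneg, div_nonneg]
  have hconst : 1 / (8 * Real.pi ^ 2) = 1 / (4 * (Real.pi ^ 2 / 2) * 4) := by ring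
  have hkernel (v : ℝ) : (v ^ 2 - 1) / v ^ 3 = (v ^ 2 - 1) * v ^ (-3 : ℤ) := by
    rw [zpow_neg, div_eq_mul_inv]
    norm_cast
  simp [boggioG, polyharmonicGreen, brkt, boggioBracket, hvol, hconst, hkernel]

/- When `x` and `y` both lie outside the closed ball, the formula is, by the Kelvin transform, the
Green function of the exterior domain. -/
theorem boggioG_pos_general (m : ℕ) {n : ℕ} {x y : EuclideanSpace ℝ (Fin n)}
    (hside : 0 < (1 - ‖x‖ ^ 2) * (1 - ‖y‖ ^ 2)) (hxy : x ≠ y) :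
    0 < polyharmonicGreen m x y := by
  have hdist : 0 < ‖x - y‖ := norm_sub_pos_iff.mpr hxy
  have hn : 0 < n := Nat.pos_of_ne_zero fun h ↦ by subst h; exact hxy (Subsingleton.elim x y)
  have hball : 0 < volume.real (ball (0 : EuclideanSpace ℝ (Fin n)) 1) :=
    ENNReal.toReal_pos (measure_ball_pos volume 0 one_pos).ne' measure_ball_lt_top.ne
  have hlimit : 1 < boggioBracket x y / ‖x - y‖ :=
    (one_lt_div hdist).mpr (norm_sub_lt_boggioBracket hside)
  exact mul_pos (by positivity) (integral_sq_sub_one_pow_mul_zpow_pos m (1 - n) hlimit)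

/-- Boggio's Green function is positive on the open unit ball. -/
theorem boggioG_pos (x y : EuclideanSpace ℝ (Fin 4))
    (hx : x ∈ ball (0 : EuclideanSpace ℝ (Fin 4)) 1)
    (hy : y ∈ ball (0 : EuclideanSpace ℝ (Fin 4)) 1) (hxy : x ≠ y) :
    0 < boggioG x y := by
  rw [boggioG_eq_polyharmonicGreen]
  exact boggioG_pos_general 1
    (mul_pos (one_sub_norm_sq_pos_of_mem_ball hx) (one_sub_norm_sq_pos_of_mem_ball hy)) hxy

end
end

section
/- Let B be the open unit ball of ℝ⁴ and define R : B × B → ℝ by R(x,y) = (1/(8π²))·( log [x,y] + ‖x−y‖²/(2·[x,y]²) − 1/2 ), where [x,y] := √(‖x−y‖² + (1−‖x‖²)(1−‖y‖²)) (note [x,y] > 0 for x, y ∈ B, so R is smooth on B × B). Then: (i) for every P ∈ B, R(P,P) = (1/(8π²))·( log(1−‖P‖²) − 1/2 ), and the map P ↦ R(P,P) attains its maximum over B uniquely at P = 0; (ii) R(x,0) = (1/(8π²))·( ‖x‖²/2 − 1/2 ) for all x ∈ B, and the Laplacian in x of the map x ↦ R(x,0) equals the constant 1/(2π²); (iii)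 with R₁(0,0) := 4·(2 − ‖0‖²) = 8, one has R₁(0,0) + 16π²·Δₓ R(0,0) = 16 > 0. -/
/-!
On the diagonal `[P,P] = |1 - ‖P‖²|`, so the Robin function is `log (1 - ‖P‖²)` up to an affine
change of scale and is largest where `‖P‖` vanishes. With pole at the origin `[x,0] = 1`
identically: the logarithm disappears, `R(·,0)` is a quadratic polynomial in `‖x‖`, and its
Laplacian is the multiple `1/(16π²)` of `Δ‖x‖² = 8`.
-/

open Metric

noncomputable section

/-- The regular part of Boggio's Green function on the unit ball:
`R(x,y) = (1/(8π²))( log [x,y] + ‖x−y‖²/(2[x,y]²) − 1/2 )`. -/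
def regR (x y : EuclideanSpace ℝ (Fin 4)) : ℝ :=
  (1 / (8 * Real.pi ^ 2)) *
    (Real.log (brkt x y) + ‖x - y‖ ^ 2 / (2 * brkt x y ^ 2) - 1 / 2)

theorem fderiv_fderiv_norm_sq_apply {E : Type*} [NormedAddCommGroup E] [InnerProductSpace ℝ E]
    (x v w : E) :
    fderiv ℝ (fun y => fderiv ℝ (fun z : E => ‖z‖ ^ 2) y v) x w = 2 * inner ℝ v w := by
  have directional_eq :
      (fun y => fderiv ℝ (fun z : E => ‖z‖ ^ 2) y v) = ⇑((2 : ℝ) • innerSL ℝ v) := by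
    funext y
    simp [fderiv_norm_sq_apply, real_inner_comm]
  rw [directional_eq, ContinuousLinearMap.fderiv]
  simp

section Laplacian

variable (f : EuclideanSpace ℝ (Fin 4) → ℝ) (c : ℝ) (x : EuclideanSpace ℝ (Fin 4))

theorem lap_norm_sq : lap (fun z => ‖z‖ ^ 2) x = 8 := by
  simp only [lap, fderiv_fderiv_norm_sq_apply, EuclideanSpace.inner_single_right]
  norm_num

theorem lap_sub_const : lap (fun z => f z - c) x = lap f x := by
  simp only [lap, fderiv_sub_const]

theorem lap_const_mul : lap (fun z => c * f z) x = c * lap f x := by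
  have fderiv_const_mul_apply (g : EuclideanSpace ℝ (Fin 4) → ℝ) (y v : EuclideanSpace ℝ (Fin 4)) :
      fderiv ℝ (fun z => c * g z) y v = c * fderiv ℝ g y v :=
    DFunLike.congr_fun (congrFun (fderiv_const_smul_field c) y) v
  simp only [lap, fderiv_const_mul_apply, Finset.mul_sum]

end Laplacian

theorem brkt_self (P : EuclideanSpace ℝ (Fin 4)) : brkt P P = |1 - ‖P‖ ^ 2| := by
  simp [brkt, Real.sqrt_mul_self_eq_abs]

theorem brkt_zero_right (x : EuclideanSpace ℝ (Fin 4)) : brkt x 0 = 1 := by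
  simp [brkt]

/-- On the unit sphere the identity relies on the junk values `log 0 = 0` and `0 / 0 = 0`. -/
theorem regR_self (P : EuclideanSpace ℝ (Fin 4)) :
    regR P P = (1 / (8 * Real.pi ^ 2)) * (Real.log |1 - ‖P‖ ^ 2| - 1 / 2) := by
  simp [regR, brkt_self]

theorem regR_zero_right (x : EuclideanSpace ℝ (Fin 4)) :
    regR x 0 = (1 / (8 * Real.pi ^ 2)) * (‖x‖ ^ 2 / 2 - 1 / 2) := by
  simp [regR, brkt_zero_right]

theorem regR_self_lt_regR_zero {P : EuclideanSpace ℝ (Fin 4)} (hP : ‖P‖ < 1) (hP₀ : P ≠ 0) :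
    regR P P < regR 0 0 := by
  have norm_sq_pos : 0 < ‖P‖ ^ 2 := pow_pos (norm_pos_iff.mpr hP₀) 2
  have norm_sq_lt_one : ‖P‖ ^ 2 < 1 := pow_lt_one₀ (norm_nonneg P) hP two_ne_zero
  have log_neg : Real.log (1 - ‖P‖ ^ 2) < 0 := Real.log_neg (by linarith) (by linarith)
  calc regR P P = 1 / (8 * Real.pi ^ 2) * (Real.log (1 - ‖P‖ ^ 2) - 1 / 2) := by
        rw [regR_self, Real.log_abs]
    _ < 1 / (8 * Real.pi ^ 2) * (0 - 1 / 2) := by gcongr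
    _ = regR 0 0 := by simp [regR_self]

theorem lap_regR_zero_right (x : EuclideanSpace ℝ (Fin 4)) :
    lap (fun z => regR z 0) x = 1 / (2 * Real.pi ^ 2) := by
  have regR_eq : (fun z => regR z 0) = fun z => 1 / (16 * Real.pi ^ 2) * (‖z‖ ^ 2 - 1) := by
    funext z
    rw [regR_zero_right]
    ring
  rw [regR_eq, lap_const_mul, lap_sub_const, lap_norm_sq]
  ring

theorem regular_part_properties_general :
    (∀ P, ‖P‖ ≠ 1 →
      regR P P = (1 / (8 * Real.pi ^ 2)) * (Real.log |1 - ‖P‖ ^ 2| - 1 / 2)) ∧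
    (∀ P ∈ ball (0 : EuclideanSpace ℝ (Fin 4)) 1, P ≠ 0 →
      regR P P < regR 0 0) ∧
    (∀ x, regR x 0 = (1 / (8 * Real.pi ^ 2)) * (‖x‖ ^ 2 / 2 - 1 / 2)) ∧
    (∀ x, lap (fun z => regR z 0) x = 1 / (2 * Real.pi ^ 2)) ∧
    (4 * (2 - ‖(0 : EuclideanSpace ℝ (Fin 4))‖ ^ 2)
        + 16 * Real.pi ^ 2 * lap (fun z => regR z 0) 0 = 16 ∧ (0:ℝ) < 16) := by
  refine ⟨fun P _ => regR_self P, fun P hP => regR_self_lt_regR_zero (mem_ball_zero_iff.mp hP),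
    regR_zero_right, lap_regR_zero_right, ?_, by norm_num⟩
  rw [lap_regR_zero_right, norm_zero]
  field_simp
  norm_num

/-- Properties of the regular part of Boggio's Green function on the unit ball `B`:
(i) the value of the Robin function `P ↦ R(P,P)` and the fact that it is uniquely maximized
at the origin; (ii) the formula for `R(·,0)` and its Laplacian; (iii) the positivity
condition `R₁(0,0) + 16π² Δₓ R(0,0) = 16 > 0`. -/
theorem regular_part_properties :
    (∀ P ∈ ball (0 : EuclideanSpace ℝ (Fin 4)) 1,
      regR P P = (1 / (8 * Real.pi ^ 2)) * (Real.log (1 - ‖P‖ ^ 2) - 1 / 2)) ∧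
    (∀ P ∈ ball (0 : EuclideanSpace ℝ (Fin 4)) 1, P ≠ 0 →
      regR P P < regR 0 0) ∧
    (∀ x ∈ ball (0 : EuclideanSpace ℝ (Fin 4)) 1,
      regR x 0 = (1 / (8 * Real.pi ^ 2)) * (‖x‖ ^ 2 / 2 - 1 / 2)) ∧
    (∀ x ∈ ball (0 : EuclideanSpace ℝ (Fin 4)) 1,
      lap (fun z => regR z 0) x = 1 / (2 * Real.pi ^ 2)) ∧
    (4 * (2 - ‖(0 : EuclideanSpace ℝ (Fin 4))‖ ^ 2)
        + 16 * Real.pi ^ 2 * lap (fun z => regR z 0) 0 = 16 ∧ (0:ℝ) < 16) :=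
  have ⟨robin_eq, robin_lt, regR_eq, lap_eq, pos⟩ := regular_part_properties_general
  ⟨fun P hP => Real.log_abs (1 - ‖P‖ ^ 2) ▸ robin_eq P (mem_ball_zero_iff.mp hP).ne, robin_lt,
    fun x _ => regR_eq x, fun x _ => lap_eq x, pos⟩

end
end

section
/- Let B̄ be the closed unit ball of ℝ⁴. There exists a constant C > 0 such that for all distinct x, y ∈ B̄, the map z ↦ G(z,y) is differentiable at x (as a function on B̄ ∖ {y}, equivalently the closed-form expression is differentiable in its first variable) and the operator norm of its Fréchet derivative at x satisfies ‖D_x G(x,y)‖ ≤ C/‖x−y‖. -/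
open Metric

noncomputable section

/-!
Put `t = [x,y]² / ‖x − y‖²`. Then `G(x,y) = Φ(t) / (8π²)` with `Φ'(t) = (t − 1) / (2t²)`, which lies
between `0` and `1 / (2t)` for `t ≥ 1`. It therefore suffices to bound the logarithmic derivative of
`t` in `x` by a multiple of `1 / ‖x − y‖`. The only term for which this is not immediate is of size
`(1 − ‖y‖²) / ‖x − y‖²`, and it is controlled by `1 − ‖y‖² ≤ 2 (1 − ‖x‖ ‖y‖) ≤ 2 [x,y]`.
-/

section BracketSquare

variable {E : Type*} [SeminormedAddCommGroup E] {x y : E}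

/-- The square `[x,y]²` of Boggio's bracket, in an arbitrary seminormed group. It stands in for
`[x,y]` because on an inner product space it is a polynomial, hence differentiable everywhere. -/
def brktSq (x y : E) : ℝ :=
  ‖x - y‖ ^ 2 + (1 - ‖x‖ ^ 2) * (1 - ‖y‖ ^ 2)

lemma one_sub_norm_sq_nonneg (hx : ‖x‖ ≤ 1) : 0 ≤ 1 - ‖x‖ ^ 2 :=
  sub_nonneg.2 (pow_le_one₀ (norm_nonneg x) hx)

lemma norm_sub_sq_le_brktSq (hx : ‖x‖ ≤ 1) (hy : ‖y‖ ≤ 1) : ‖x - y‖ ^ 2 ≤ brktSq x y :=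
  le_add_of_nonneg_right (mul_nonneg (one_sub_norm_sq_nonneg hx) (one_sub_norm_sq_nonneg hy))

lemma one_le_brktSq_div_norm_sub_sq (hx : ‖x‖ ≤ 1) (hy : ‖y‖ ≤ 1) (hxy : ‖x - y‖ ≠ 0) :
    1 ≤ brktSq x y / ‖x - y‖ ^ 2 :=
  (one_le_div (by positivity)).2 (norm_sub_sq_le_brktSq hx hy)

lemma brktSq_pos (hx : ‖x‖ ≤ 1) (hy : ‖y‖ ≤ 1) (hxy : ‖x - y‖ ≠ 0) : 0 < brktSq x y :=
  (by positivity : 0 < ‖x - y‖ ^ 2).trans_le (norm_sub_sq_le_brktSq hx hy)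

variable [InnerProductSpace ℝ E]

lemma sq_one_sub_norm_mul_norm_le_brktSq (x y : E) : (1 - ‖x‖ * ‖y‖) ^ 2 ≤ brktSq x y := by
  rw [brktSq, norm_sub_sq_real]
  linarith [real_inner_le_norm x y]

lemma sq_one_sub_norm_sq_le_four_mul_brktSq (hx : ‖x‖ ≤ 1) (hy : ‖y‖ ≤ 1) :
    (1 - ‖y‖ ^ 2) ^ 2 ≤ 4 * brktSq x y := by
  have hlinear : 1 - ‖y‖ ^ 2 ≤ 2 * (1 - ‖x‖ * ‖y‖) := by
    nlinarith [mul_le_of_le_one_left (norm_nonneg y) hx, sq_nonneg (1 - ‖y‖)]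
  calc (1 - ‖y‖ ^ 2) ^ 2 ≤ (2 * (1 - ‖x‖ * ‖y‖)) ^ 2 :=
        pow_le_pow_left₀ (one_sub_norm_sq_nonneg hy) hlinear 2
    _ = 4 * (1 - ‖x‖ * ‖y‖) ^ 2 := by ring
    _ ≤ 4 * brktSq x y := by gcongr; exact sq_one_sub_norm_mul_norm_le_brktSq x y

lemma one_sub_norm_sq_mul_norm_sub_le_two_mul_brktSq (hx : ‖x‖ ≤ 1) (hy : ‖y‖ ≤ 1) :
    (1 - ‖y‖ ^ 2) * ‖x - y‖ ≤ 2 * brktSq x y := by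
  linarith [sq_one_sub_norm_sq_le_four_mul_brktSq hx hy, norm_sub_sq_le_brktSq hx hy,
    two_mul_le_add_sq (1 - ‖y‖ ^ 2) (2 * ‖x - y‖)]

end BracketSquare

section BracketQuotient

variable {E : Type*} [NormedAddCommGroup E] [InnerProductSpace ℝ E] {x y : E}

lemma hasFDerivAt_norm_sub_sq (x y : E) :
    HasFDerivAt (fun z => ‖z - y‖ ^ 2) (2 • innerSL ℝ (x - y)) x :=
  ((hasFDerivAt_id x).sub_const y).norm_sq

lemma hasFDerivAt_brktSq (x y : E) :
    HasFDerivAt (fun z => brktSq z y)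
      (2 • innerSL ℝ (x - y) - (2 * (1 - ‖y‖ ^ 2)) • innerSL ℝ x) x := by
  have hnorm : HasFDerivAt (fun z : E => ‖z‖ ^ 2) (2 • innerSL ℝ x) x := by
    simpa using hasFDerivAt_norm_sub_sq x 0
  refine ((hasFDerivAt_norm_sub_sq x y).add
    ((hnorm.const_sub 1).mul_const (1 - ‖y‖ ^ 2))).congr_fderiv ?_
  module

lemma hasFDerivAt_brktSq_div_norm_sub_sq (hxy : x ≠ y) :
    HasFDerivAt (fun z => brktSq z y / ‖z - y‖ ^ 2)
      (-(2 * (1 - ‖y‖ ^ 2) / ‖x - y‖ ^ 2) • innerSL ℝ x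
        - (2 * ((1 - ‖x‖ ^ 2) * (1 - ‖y‖ ^ 2)) / ‖x - y‖ ^ 4) • innerSL ℝ (x - y)) x := by
  have hd : ‖x - y‖ ≠ 0 := norm_sub_eq_zero_iff.not.2 hxy
  have hinv := (hasDerivAt_inv (pow_ne_zero 2 hd)).comp_hasFDerivAt x (hasFDerivAt_norm_sub_sq x y)
  refine ((hasFDerivAt_brktSq x y).mul hinv).congr_fderiv ?_
  simp only [Function.comp_apply, brktSq]
  match_scalars
  · field_simp
    ring
  · field_simp

lemma norm_fderiv_brktSq_div_norm_sub_sq_le (hx : ‖x‖ ≤ 1) (hy : ‖y‖ ≤ 1) (hxy : x ≠ y) :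
    ‖fderiv ℝ (fun z => brktSq z y / ‖z - y‖ ^ 2) x‖
      ≤ 6 * (brktSq x y / ‖x - y‖ ^ 2) / ‖x - y‖ := by
  have hd : 0 < ‖x - y‖ := norm_sub_pos_iff.2 hxy
  have ha := one_sub_norm_sq_nonneg hx
  have hb := one_sub_norm_sq_nonneg hy
  rw [(hasFDerivAt_brktSq_div_norm_sub_sq hxy).fderiv]
  calc _ ≤ 2 * (1 - ‖y‖ ^ 2) / ‖x - y‖ ^ 2 * ‖x‖
          + 2 * ((1 - ‖x‖ ^ 2) * (1 - ‖y‖ ^ 2)) / ‖x - y‖ ^ 4 * ‖x - y‖ := by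
        refine (norm_sub_le _ _).trans_eq ?_
        rw [norm_smul, norm_smul, innerSL_apply_norm, innerSL_apply_norm, norm_neg,
          Real.norm_of_nonneg (by positivity), Real.norm_of_nonneg (by positivity)]
    _ ≤ 2 * (1 - ‖y‖ ^ 2) / ‖x - y‖ ^ 2 * 1
          + 2 * ((1 - ‖x‖ ^ 2) * (1 - ‖y‖ ^ 2)) / ‖x - y‖ ^ 4 * ‖x - y‖ := by gcongr
    _ = 2 * ((1 - ‖y‖ ^ 2) * ‖x - y‖ + (1 - ‖x‖ ^ 2) * (1 - ‖y‖ ^ 2)) / ‖x - y‖ ^ 3 := by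
        field_simp
    _ ≤ 2 * (2 * brktSq x y + brktSq x y) / ‖x - y‖ ^ 3 := by
        have hprod : (1 - ‖x‖ ^ 2) * (1 - ‖y‖ ^ 2) ≤ brktSq x y :=
          le_add_of_nonneg_left (sq_nonneg ‖x - y‖)
        gcongr ?_ * (?_ + ?_) / _
        exact one_sub_norm_sq_mul_norm_sub_le_two_mul_brktSq hx hy
    _ = 6 * (brktSq x y / ‖x - y‖ ^ 2) / ‖x - y‖ := by
        field_simp
        ring

end BracketQuotient

lemma hasDerivAt_integral_sq_sub_one_div_cube {r : ℝ} (hr : 0 < r) :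
    HasDerivAt (fun u => ∫ v in (1 : ℝ)..u, (v ^ 2 - 1) / v ^ 3) ((r ^ 2 - 1) / r ^ 3) r := by
  have hcont : ContinuousOn (fun v : ℝ => (v ^ 2 - 1) / v ^ 3) (Set.Ioi 0) :=
    ContinuousOn.div (by fun_prop) (by fun_prop) fun v hv => pow_ne_zero 3 (ne_of_gt hv)
  have hsubset : Set.uIcc 1 r ⊆ Set.Ioi 0 :=
    Set.ordConnected_Ioi.uIcc_subset (Set.mem_Ioi.2 one_pos) hr
  exact intervalIntegral.integral_hasDerivAt_right (hcont.mono hsubset).intervalIntegrable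
    (hcont.stronglyMeasurableAtFilter isOpen_Ioi r hr) (hcont.continuousAt (Ioi_mem_nhds hr))

lemma hasDerivAt_integral_sqrt_sq_sub_one_div_cube {t : ℝ} (ht : 0 < t) :
    HasDerivAt (fun s => ∫ v in (1 : ℝ)..√s, (v ^ 2 - 1) / v ^ 3) ((t - 1) / (2 * t ^ 2)) t := by
  have hsqrt : 0 < √t := Real.sqrt_pos.2 ht
  refine ((hasDerivAt_integral_sq_sub_one_div_cube hsqrt).comp t
    (Real.hasDerivAt_sqrt ht.ne')).congr_deriv (Eq.symm ?_)
  calc (t - 1) / (2 * t ^ 2) = (√t ^ 2 - 1) / (2 * (√t ^ 2) ^ 2) := by rw [Real.sq_sqrt ht.le]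
    _ = (√t ^ 2 - 1) / √t ^ 3 * (1 / (2 * √t)) := by field_simp

lemma sub_one_div_two_mul_sq_le {t : ℝ} (ht : 0 < t) : (t - 1) / (2 * t ^ 2) ≤ 1 / (2 * t) := by
  rw [div_le_div_iff₀ (by positivity) (by positivity)]
  nlinarith

section Green

variable {x y : EuclideanSpace ℝ (Fin 4)}

lemma brkt_div_norm_sub (x y : EuclideanSpace ℝ (Fin 4)) :
    brkt x y / ‖x - y‖ = √(brktSq x y / ‖x - y‖ ^ 2) := by
  rw [Real.sqrt_div' _ (sq_nonneg _), Real.sqrt_sq (norm_nonneg _), brkt, brktSq]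

lemma hasFDerivAt_boggioG (hxy : x ≠ y) (hpos : 0 < brktSq x y) :
    HasFDerivAt (fun z => boggioG z y)
      ((1 / (8 * Real.pi ^ 2)) •
        ((brktSq x y / ‖x - y‖ ^ 2 - 1) / (2 * (brktSq x y / ‖x - y‖ ^ 2) ^ 2)) •
          fderiv ℝ (fun z => brktSq z y / ‖z - y‖ ^ 2) x) x := by
  have hquotient : 0 < brktSq x y / ‖x - y‖ ^ 2 :=
    div_pos hpos (pow_pos (norm_sub_pos_iff.2 hxy) 2)
  simp only [boggioG, brkt_div_norm_sub]
  exact ((hasDerivAt_integral_sqrt_sq_sub_one_div_cube hquotient).comp_hasFDerivAt x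
    (hasFDerivAt_brktSq_div_norm_sub_sq hxy).differentiableAt.hasFDerivAt).const_mul _

lemma differentiableAt_boggioG (hx : ‖x‖ ≤ 1) (hy : ‖y‖ ≤ 1) (hxy : x ≠ y) :
    DifferentiableAt ℝ (fun z => boggioG z y) x :=
  (hasFDerivAt_boggioG hxy
    (brktSq_pos hx hy (norm_sub_eq_zero_iff.not.2 hxy))).differentiableAt

lemma norm_fderiv_boggioG_le (hx : ‖x‖ ≤ 1) (hy : ‖y‖ ≤ 1) (hxy : x ≠ y) :
    ‖fderiv ℝ (fun z => boggioG z y) x‖ ≤ 3 / (8 * Real.pi ^ 2) / ‖x - y‖ := by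
  have hd : 0 < ‖x - y‖ := norm_sub_pos_iff.2 hxy
  have hone := one_le_brktSq_div_norm_sub_sq hx hy hd.ne'
  have hpos := one_pos.trans_le hone
  have hbound := norm_fderiv_brktSq_div_norm_sub_sq_le hx hy hxy
  rw [(hasFDerivAt_boggioG hxy (brktSq_pos hx hy hd.ne')).fderiv]
  set t := brktSq x y / ‖x - y‖ ^ 2
  have hnonneg : 0 ≤ (t - 1) / (2 * t ^ 2) := div_nonneg (sub_nonneg.2 hone) (by positivity)
  rw [norm_smul, norm_smul, Real.norm_of_nonneg (by positivity), Real.norm_of_nonneg hnonneg]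
  calc _ ≤ 1 / (8 * Real.pi ^ 2) * (1 / (2 * t) * (6 * t / ‖x - y‖)) := by
        gcongr _ * (?_ * ?_)
        exact sub_one_div_two_mul_sq_le hpos
    _ = 3 / (8 * Real.pi ^ 2) / ‖x - y‖ := by
        field_simp
        norm_num

end Green

lemma uniqueDiffWithinAt_closedBall_diff_singleton {E : Type*} [NormedAddCommGroup E]
    [NormedSpace ℝ E] {c x y : E} {r : ℝ} (hr : 0 < r) (hx : x ∈ closedBall c r) (hxy : x ≠ y) :
    UniqueDiffWithinAt ℝ (closedBall c r \ {y}) x := by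
  have hinterior : (interior (closedBall c r)).Nonempty :=
    ⟨c, ball_subset_interior_closedBall (mem_ball_self hr)⟩
  exact (uniqueDiffOn_convex (convex_closedBall c r) hinterior x hx).inter
    (isOpen_compl_singleton.mem_nhds hxy)

/-- Gradient bound for Boggio's Green function on the closed unit ball: the map
`z ↦ G(z,y)`, as a function on `B̄ ∖ {y}`, is differentiable at `x` and the operator norm
of its derivative is at most `C/‖x−y‖`. -/
theorem boggioG_gradient_bound :
    ∃ C > (0:ℝ), ∀ x ∈ closedBall (0 : EuclideanSpace ℝ (Fin 4)) 1,
      ∀ y ∈ closedBall (0 : EuclideanSpace ℝ (Fin 4)) 1, x ≠ y →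
        DifferentiableWithinAt ℝ (fun z => boggioG z y)
          (closedBall (0 : EuclideanSpace ℝ (Fin 4)) 1 \ {y}) x ∧
        ‖fderivWithin ℝ (fun z => boggioG z y)
            (closedBall (0 : EuclideanSpace ℝ (Fin 4)) 1 \ {y}) x‖ ≤ C / ‖x - y‖ := by
  refine ⟨3 / (8 * Real.pi ^ 2), by positivity, fun x hx y hy hxy => ?_⟩
  have hx_norm : ‖x‖ ≤ 1 := mem_closedBall_zero_iff.1 hx
  have hy_norm : ‖y‖ ≤ 1 := mem_closedBall_zero_iff.1 hy
  have hdiff : DifferentiableAt ℝ (fun z => boggioG z y) x :=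
    differentiableAt_boggioG hx_norm hy_norm hxy
  refine ⟨hdiff.differentiableWithinAt, ?_⟩
  rw [fderivWithin_eq_fderiv (uniqueDiffWithinAt_closedBall_diff_singleton one_pos hx hxy) hdiff]
  exact norm_fderiv_boggioG_le hx_norm hy_norm hxy

end
end

section
/- Let Ω ⊆ ℝ⁴ be a bounded measurable set, let i ∈ {1,2,3}, and let p be a real number with 1 < p < 4/i. Then there exists a constant C > 0 (depending only on Ω, i, and p) such that for every nonnegative integrable function w on Ω, the function v(x) := ∫_Ω ‖x−y‖^{−i}·w(y) dy satisfies ∫_Ω v(x)^p dx ≤ C·(∫_Ω w(y) dy)^p. -/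
open MeasureTheory

/-!
For a measure `ν` of mass `m`, Jensen's inequality gives
`(∫ ‖x - y‖ ^ (-a) dν(y)) ^ p ≤ m ^ (p - 1) * ∫ ‖x - y‖ ^ (-a * p) dν(y)`. Integrating over `x` in
a bounded set and exchanging the integrals leaves `∫ ‖x - y‖ ^ (-a * p) dx`, which is bounded
uniformly for `y` in a bounded set because `a * p` is less than the dimension. For the potential of
a function `w`, take `ν = w dy`.
-/

open Module Metric Bornology
open scoped ENNReal

section Jensen

variable {X Y : Type*} [MeasurableSpace X] [MeasurableSpace Y] {μ : Measure X} {ν : Measure Y}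
  {p : ℝ}

lemma rpow_lintegral_le_lintegral_rpow_mul_measure_univ (hp : 1 ≤ p) {f : Y → ℝ≥0∞}
    (hf : AEMeasurable f ν) :
    (∫⁻ y, f y ∂ν) ^ p ≤ (∫⁻ y, f y ^ p ∂ν) * ν Set.univ ^ (p - 1) := by
  have hp₀ : 0 < p := one_pos.trans_le hp
  have holder : ∫⁻ y, f y ∂ν ≤ (∫⁻ y, f y ^ p ∂ν) ^ (1 / p) * ν Set.univ ^ (1 - 1 / p) := by
    simpa [eLpNorm'] using
      eLpNorm'_le_eLpNorm'_mul_rpow_measure_univ one_pos hp hf.aestronglyMeasurable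
  calc (∫⁻ y, f y ∂ν) ^ p
      ≤ ((∫⁻ y, f y ^ p ∂ν) ^ (1 / p) * ν Set.univ ^ (1 - 1 / p)) ^ p := by gcongr
    _ = (∫⁻ y, f y ^ p ∂ν) * ν Set.univ ^ (p - 1) := by
      rw [ENNReal.mul_rpow_of_nonneg _ _ hp₀.le, ← ENNReal.rpow_mul, ← ENNReal.rpow_mul,
        one_div_mul_cancel hp₀.ne', ENNReal.rpow_one, sub_mul, one_mul,
        one_div_mul_cancel hp₀.ne']

lemma lintegral_rpow_lintegral_le [SFinite μ] [SFinite ν] (hp : 1 ≤ p) {k : X → Y → ℝ≥0∞}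
    (hk : AEMeasurable (Function.uncurry k) (μ.prod ν)) {M : ℝ≥0∞}
    (hM : ∀ᵐ y ∂ν, ∫⁻ x, k x y ^ p ∂μ ≤ M) :
    ∫⁻ x, (∫⁻ y, k x y ∂ν) ^ p ∂μ ≤ M * ν Set.univ ^ p := by
  have hkp : AEMeasurable (Function.uncurry fun x y => k x y ^ p) (μ.prod ν) := hk.pow_const p
  calc ∫⁻ x, (∫⁻ y, k x y ∂ν) ^ p ∂μ
      ≤ ∫⁻ x, (∫⁻ y, k x y ^ p ∂ν) * ν Set.univ ^ (p - 1) ∂μ :=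
        lintegral_mono_ae <| hk.aestronglyMeasurable.prodMk_left.mono fun _ hx =>
          rpow_lintegral_le_lintegral_rpow_mul_measure_univ hp hx.aemeasurable
    _ = (∫⁻ y, ∫⁻ x, k x y ^ p ∂μ ∂ν) * ν Set.univ ^ (p - 1) := by
        rw [lintegral_mul_const'' _ hkp.lintegral_prod_right, lintegral_lintegral_swap hkp]
    _ ≤ (∫⁻ _, M ∂ν) * ν Set.univ ^ (p - 1) := by
        gcongr ?_ * _
        exact lintegral_mono_ae hM
    _ = M * ν Set.univ ^ p := by
        have hpow := ENNReal.rpow_add_of_nonneg (x := ν Set.univ) 1 (p - 1) zero_le_one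
          (sub_nonneg.2 hp)
        rw [add_sub_cancel, ENNReal.rpow_one] at hpow
        rw [lintegral_const, mul_assoc, hpow]

end Jensen

/-- The unnormalized Riesz potential `x ↦ ∫ |x - y| ^ (-a) dν(y)` of a measure `ν`, with values in
`ℝ≥0∞` so that it is defined everywhere. The kernel is `∞` on the diagonal when `0 < a`. The
potential of a function `w` with respect to `μ` is that of the measure `μ.withDensity w`. -/
noncomputable def rieszPotential {X : Type*} [PseudoEMetricSpace X] [MeasurableSpace X]
    (a : ℝ) (ν : Measure X) (x : X) : ℝ≥0∞ :=
  ∫⁻ y, edist x y ^ (-a) ∂ν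

lemma rieszPotential_withDensity {X : Type*} [PseudoEMetricSpace X] [MeasurableSpace X]
    [OpensMeasurableSpace X] (a : ℝ) {μ : Measure X} {w : X → ℝ≥0∞} (hw : AEMeasurable w μ)
    (x : X) :
    rieszPotential a (μ.withDensity w) x = ∫⁻ y, edist x y ^ (-a) * w y ∂μ := by
  have hk : Measurable fun y => edist x y ^ (-a) := by fun_prop
  simp only [rieszPotential, lintegral_withDensity_eq_lintegral_mul₀ hw hk.aemeasurable,
    Pi.mul_apply, mul_comm]

section NormedSpace

variable {E : Type*} [NormedAddCommGroup E] [MeasurableSpace E] [BorelSpace E]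

lemma setLIntegral_closedBall_edist_rpow (μ : Measure E) [μ.IsAddRightInvariant] (b r : ℝ)
    (y : E) :
    ∫⁻ x in closedBall y r, edist x y ^ b ∂μ = ∫⁻ x in closedBall 0 r, ‖x‖ₑ ^ b ∂μ := by
  have hpre : (fun x => x - y) ⁻¹' closedBall 0 r = closedBall y r := by
    ext x
    simp [dist_eq_norm]
  simp only [edist_eq_enorm_sub, ← hpre]
  exact (measurePreserving_sub_right μ y).setLIntegral_comp_preimage measurableSet_closedBall
    (by fun_prop : Measurable fun x : E => ‖x‖ₑ ^ b)

variable [NormedSpace ℝ E] [FiniteDimensional ℝ E] [Nontrivial E]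
  (μ : Measure E) [μ.IsAddHaarMeasure]

lemma setLIntegral_closedBall_enorm_rpow_lt_top {b : ℝ} (hb : b < finrank ℝ E) (r : ℝ) :
    ∫⁻ x in closedBall 0 r, ‖x‖ₑ ^ (-b) ∂μ < ∞ := by
  have hloc : LocallyIntegrable (fun x : E => ‖x‖ ^ (-b)) μ :=
    locallyIntegrable_of_norm_le_rpow (C := 1) finrank_pos hb
      (.of_forall fun x => by rw [one_mul, Real.norm_of_nonneg (by positivity)])
      (by fun_prop : Measurable fun x : E => ‖x‖ ^ (-b)).aestronglyMeasurable
  -- For `0 < b` the two integrands differ at the origin, where real powers give `0 ^ (-b) = 0`.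
  have hae : ∀ᵐ x ∂μ, ‖x‖ₑ ^ (-b) = ENNReal.ofReal (‖x‖ ^ (-b)) := by
    filter_upwards [Measure.ae_ne μ 0] with x hx
    rw [← ENNReal.ofReal_rpow_of_pos (norm_pos_iff.2 hx), ofReal_norm]
  rw [lintegral_congr_ae (ae_restrict_of_ae hae)]
  exact (hloc.integrableOn_isCompact (isCompact_closedBall 0 r)).lintegral_lt_top

lemma exists_setLIntegral_edist_rpow_le {s t : Set E} (hs : IsBounded s) (ht : IsBounded t) {b : ℝ}
    (hb : b < finrank ℝ E) :
    ∃ M < ∞, ∀ y ∈ t, ∫⁻ x in s, edist x y ^ (-b) ∂μ ≤ M := by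
  refine ⟨_, setLIntegral_closedBall_enorm_rpow_lt_top μ hb (diam (s ∪ t)), fun y hy => ?_⟩
  have hsub : s ⊆ closedBall y (diam (s ∪ t)) := fun x hx =>
    dist_le_diam_of_mem (hs.union ht) (.inl hx) (.inr hy)
  exact (lintegral_mono_set hsub).trans_eq (setLIntegral_closedBall_edist_rpow μ (-b) _ y)

lemma exists_setLIntegral_rieszPotential_rpow_le {s t : Set E} (hs : IsBounded s)
    (ht : IsBounded t) {a p : ℝ} (hp : 1 ≤ p) (hap : a * p < finrank ℝ E) :
    ∃ C > (0 : ℝ), ∀ (ν : Measure E) [SFinite ν], (∀ᵐ y ∂ν, y ∈ t) →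
      ∫⁻ x in s, rieszPotential a ν x ^ p ∂μ ≤ ENNReal.ofReal C * ν Set.univ ^ p := by
  obtain ⟨M, hM, hkernel⟩ := exists_setLIntegral_edist_rpow_le μ hs ht hap
  refine ⟨M.toReal + 1, by positivity, fun ν _ hν => ?_⟩
  have hMC : M ≤ ENNReal.ofReal (M.toReal + 1) :=
    (ENNReal.le_ofReal_iff_toReal_le hM.ne (by positivity)).2 (by simp)
  have hmeas : Measurable (Function.uncurry fun x y : E => edist x y ^ (-a)) :=
    measurable_edist.pow_const _
  refine lintegral_rpow_lintegral_le hp hmeas.aemeasurable (hν.mono fun y hy => ?_)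
  simp only [← ENNReal.rpow_mul, neg_mul]
  exact (hkernel y hy).trans hMC

theorem riesz_potential_Lp_bound_general {Ω : Set E} (hΩ : IsBounded Ω) {a p : ℝ} (hp : 1 ≤ p)
    (hap : a * p < finrank ℝ E) :
    ∃ C > (0 : ℝ), ∀ w : E → ℝ≥0∞, AEMeasurable w (μ.restrict Ω) →
      ∫⁻ x in Ω, (∫⁻ y in Ω, edist x y ^ (-a) * w y ∂μ) ^ p ∂μ
        ≤ ENNReal.ofReal C * (∫⁻ y in Ω, w y ∂μ) ^ p := by
  obtain ⟨C, hC, hbound⟩ := exists_setLIntegral_rieszPotential_rpow_le μ hΩ hΩ.closure hp hap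
  refine ⟨C, hC, fun w hw => ?_⟩
  have hmem : ∀ᵐ y ∂μ.restrict Ω, y ∈ closure Ω :=
    ae_restrict_of_ae_restrict_of_subset subset_closure (ae_restrict_mem measurableSet_closure)
  simpa only [rieszPotential_withDensity a hw, withDensity_apply _ MeasurableSet.univ,
    Measure.restrict_univ] using
    hbound ((μ.restrict Ω).withDensity w) ((withDensity_absolutelyContinuous _ w).ae_le hmem)

end NormedSpace

/-- Riesz-type potential estimate: for `Ω ⊆ ℝ⁴` bounded and measurable, `i ∈ {1,2,3}` and
`1 < p < 4/i`, there is `C > 0` such that for every nonnegative integrable `w` on `Ω`,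
the potential `v(x) = ∫_Ω ‖x−y‖^{−i} w(y) dy` satisfies
`∫_Ω v^p dx ≤ C (∫_Ω w dy)^p`. -/
theorem riesz_potential_Lp_bound (Ω : Set (EuclideanSpace ℝ (Fin 4)))
    (hmeas : MeasurableSet Ω) (hbdd : Bornology.IsBounded Ω)
    (i : ℕ) (hi : i = 1 ∨ i = 2 ∨ i = 3) (p : ℝ) (hp1 : 1 < p) (hp2 : p < 4 / (i:ℝ)) :
    ∃ C > (0:ℝ), ∀ w : EuclideanSpace ℝ (Fin 4) → ℝ,
      (∀ y, 0 ≤ w y) → IntegrableOn w Ω →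
      ∫⁻ x in Ω, (∫⁻ y in Ω, (edist x y) ^ (-(i:ℝ)) * ENNReal.ofReal (w y)) ^ p
        ≤ ENNReal.ofReal C * (∫⁻ y in Ω, ENNReal.ofReal (w y)) ^ p := by
  have hip : i * p < finrank ℝ (EuclideanSpace ℝ (Fin 4)) := by
    rcases hi with rfl | rfl | rfl <;> norm_num at hp2 ⊢ <;> linarith
  obtain ⟨C, hC, hbound⟩ := riesz_potential_Lp_bound_general volume hbdd hp1.le hip
  exact ⟨C, hC, fun w _ hw => hbound _ hw.aestronglyMeasurable.aemeasurable.ennreal_ofReal⟩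
end

section
/- Let R > 0 and let p ∈ {1,2,3}. Then there exists a constant C > 0 (depending only on R and p) such that for all x, z in the closed ball B̄_R(0) ⊂ ℝ⁴ with x ≠ z, one has ∫_{B_R(0) ∖ B_{‖x−z‖/2}(z)} ‖x−y‖^{−p}·‖y−z‖^{−4} dy ≤ C·‖x−z‖^{−p}. -/
open MeasureTheory Metric

/-!
In dimension `n`, let `s` and `t` be the exponents of the two factors and let `d = ‖x - z‖`. On the
ball of radius `d / 2` around `x`, the distance to `z` is comparable with `d`, so in polar
coordinates around `x` the integral is at most a multiple of `d ^ t * ∫ r in 0..d/2, r ^ (n-1+s)`.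
Off that ball and off the ball of radius `c * d` around `z`, the distances to `x` and to `z` are
comparable with each other, so in polar coordinates around `z` the integral is at most a multiple of
`∫ r in c*d..∞, r ^ (n-1+s+t)`. Both bounds are multiples of `d ^ (n+s+t)`.
-/

open Set Module
open scoped ENNReal

section PowerIntegrals

lemma lintegral_Ioo_rpow {a r : ℝ} (ha : -1 < a) (hr : 0 ≤ r) :
    ∫⁻ u in Ioo 0 r, ENNReal.ofReal (u ^ a) = ENNReal.ofReal (r ^ (a + 1) / (a + 1)) := by
  have integrable : IntegrableOn (fun u : ℝ ↦ u ^ a) (Ioc 0 r) :=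
    (intervalIntegrable_iff_integrableOn_Ioc_of_le hr).1
      (intervalIntegral.intervalIntegrable_rpow' ha)
  have nonneg : 0 ≤ᵐ[volume.restrict (Ioc 0 r)] fun u : ℝ ↦ u ^ a := by
    filter_upwards [ae_restrict_mem measurableSet_Ioc] with u hu
    exact Real.rpow_nonneg hu.1.le a
  rw [Measure.restrict_congr_set Ioo_ae_eq_Ioc,
    ← ofReal_integral_eq_lintegral_ofReal integrable nonneg,
    ← intervalIntegral.integral_of_le hr, integral_rpow (.inl ha), Real.zero_rpow (by linarith),
    sub_zero]

lemma lintegral_Ici_rpow {a r : ℝ} (ha : a < -1) (hr : 0 < r) :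
    ∫⁻ u in Ici r, ENNReal.ofReal (u ^ a) = ENNReal.ofReal (-r ^ (a + 1) / (a + 1)) := by
  have nonneg : 0 ≤ᵐ[volume.restrict (Ioi r)] fun u : ℝ ↦ u ^ a := by
    filter_upwards [ae_restrict_mem measurableSet_Ioi] with u hu
    exact Real.rpow_nonneg (hr.trans hu).le a
  rw [Measure.restrict_congr_set Ioi_ae_eq_Ici.symm,
    ← ofReal_integral_eq_lintegral_ofReal (integrableOn_Ioi_rpow_of_lt ha hr) nonneg,
    integral_Ioi_rpow_of_lt ha hr]

end PowerIntegrals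

section ComparableDistances

variable {X : Type*} [PseudoMetricSpace X] {x y z w : X}

lemma edist_le_ofReal_mul_edist {K : ℝ} (hK : 0 ≤ K) (h : dist x y ≤ K * dist z w) :
    edist x y ≤ ENNReal.ofReal K * edist z w := by
  rw [edist_dist, edist_dist, ← ENNReal.ofReal_mul hK]
  exact ENNReal.ofReal_le_ofReal h

lemma edist_rpow_le_of_dist_le_mul {K : ℝ} (hK : 0 < K) (h : dist x y ≤ K * dist z w)
    (h' : dist z w ≤ K * dist x y) (s : ℝ) :
    edist x y ^ s ≤ ENNReal.ofReal (K ^ |s|) * edist z w ^ s := by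
  have mul_rpow (L : ℝ) (hL : 0 < L) :
      (ENNReal.ofReal L * edist z w) ^ s = ENNReal.ofReal (L ^ s) * edist z w ^ s := by
    rw [ENNReal.mul_rpow_of_ne_top ENNReal.ofReal_ne_top (edist_ne_top z w),
      ENNReal.ofReal_rpow_of_pos hL]
  rcases le_total 0 s with hs | hs
  · rw [abs_of_nonneg hs, ← mul_rpow K hK]
    exact ENNReal.rpow_le_rpow (edist_le_ofReal_mul_edist hK.le h) hs
  · have lower : ENNReal.ofReal K⁻¹ * edist z w ≤ edist x y := by
      rw [ENNReal.ofReal_inv_of_pos hK, mul_comm, ← div_eq_mul_inv]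
      exact ENNReal.div_le_of_le_mul' (edist_le_ofReal_mul_edist hK.le h')
    rw [abs_of_nonpos hs, Real.rpow_neg hK.le, ← Real.inv_rpow hK.le,
      ← mul_rpow K⁻¹ (inv_pos.2 hK), ← neg_neg s, ENNReal.rpow_neg _ (-s),
      ENNReal.rpow_neg _ (-s), ENNReal.inv_le_inv]
    exact ENNReal.rpow_le_rpow lower (neg_nonneg.2 hs)

lemma edist_rpow_le_of_mem_ball_half (hy : y ∈ ball x (dist x z / 2)) (t : ℝ) :
    edist y z ^ t ≤ ENNReal.ofReal (2 ^ |t|) * edist x z ^ t := by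
  rw [mem_ball] at hy
  have := dist_triangle y x z
  have := dist_triangle_left x z y
  exact edist_rpow_le_of_dist_le_mul two_pos (by linarith) (by linarith) t

lemma edist_rpow_le_of_notMem_balls {c : ℝ} (hc : 0 < c) (hyx : y ∉ ball x (dist x z / 2))
    (hyz : y ∉ ball z (c * dist x z)) (s : ℝ) :
    edist x y ^ s ≤ ENNReal.ofReal ((3 + c⁻¹) ^ |s|) * edist y z ^ s := by
  rw [mem_ball, not_lt] at hyz
  rw [mem_ball', not_lt] at hyx
  have hxz : dist x z ≤ c⁻¹ * dist y z := (le_inv_mul_iff₀ hc).2 hyz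
  have := dist_triangle_right x y z
  have := dist_triangle_left y z x
  have : 0 ≤ c⁻¹ * dist x y := by positivity
  have : 0 ≤ dist y z := dist_nonneg
  exact edist_rpow_le_of_dist_le_mul (by positivity) (by linarith) (by linarith) s

end ComparableDistances

section AddHaar

variable {E : Type*} [NormedAddCommGroup E] [NormedSpace ℝ E] [FiniteDimensional ℝ E]
  [MeasurableSpace E] [BorelSpace E] (μ : Measure E) [μ.IsAddHaarMeasure]

section Radial

variable [Nontrivial E]

lemma lintegral_fun_norm_addHaar {f : ℝ → ℝ≥0∞} (hf : Measurable f) :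
    ∫⁻ x, f ‖x‖ ∂μ =
      μ.toSphere univ * ∫⁻ r in Ioi (0 : ℝ), ENNReal.ofReal (r ^ (finrank ℝ E - 1)) * f r :=
  calc
    ∫⁻ x, f ‖x‖ ∂μ = ∫⁻ x : ({0}ᶜ : Set E), f ‖x.1‖ ∂(μ.comap (↑)) := by
      rw [lintegral_subtype_comap (measurableSet_singleton _).compl fun x ↦ f ‖x‖,
        restrict_compl_singleton]
    _ = ∫⁻ x, f x.2 ∂μ.toSphere.prod (.volumeIoiPow (finrank ℝ E - 1)) := by
      simpa using μ.measurePreserving_homeomorphUnitSphereProd.lintegral_comp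
        (f := fun x ↦ f x.2) (by fun_prop)
    _ = μ.toSphere univ * ∫⁻ r : Ioi (0 : ℝ), f r ∂.volumeIoiPow (finrank ℝ E - 1) := by
      rw [lintegral_prod _ (by fun_prop)]
      simp only [lintegral_const, mul_comm]
    _ = _ := by
      rw [Measure.volumeIoiPow, lintegral_withDensity_eq_lintegral_mul _ (by fun_prop)
        (by fun_prop), ← lintegral_subtype_comap measurableSet_Ioi]
      rfl

lemma setLIntegral_edist_rpow {S : Set ℝ} (hS : MeasurableSet S) (z : E) (s : ℝ) :
    ∫⁻ y in (dist · z) ⁻¹' S, edist y z ^ s ∂μ =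
      μ.toSphere univ * ∫⁻ r in S ∩ Ioi 0, ENNReal.ofReal (r ^ (finrank ℝ E - 1 + s)) := by
  have radial (y : E) : ((dist · z) ⁻¹' S).indicator (fun y ↦ edist y z ^ s) y =
      S.indicator (fun r ↦ ENNReal.ofReal r ^ s) ‖y - z‖ := by
    classical simp only [indicator_apply, mem_preimage, edist_dist, dist_eq_norm]
  have power {r : ℝ} (hr : 0 < r) : ENNReal.ofReal (r ^ (finrank ℝ E - 1)) * ENNReal.ofReal r ^ s =
      ENNReal.ofReal (r ^ (finrank ℝ E - 1 + s)) := by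
    rw [ENNReal.ofReal_rpow_of_pos hr, ← ENNReal.ofReal_mul (by positivity), Real.rpow_add hr,
      ← Nat.cast_pred finrank_pos, Real.rpow_natCast]
  rw [← lintegral_indicator ((by fun_prop : Measurable (dist · z)) hS), lintegral_congr radial,
    lintegral_sub_right_eq_self (fun y ↦ S.indicator (fun r ↦ ENNReal.ofReal r ^ s) ‖y‖) z,
    lintegral_fun_norm_addHaar μ ((by fun_prop : Measurable _).indicator hS),
    ← Measure.restrict_restrict hS, ← lintegral_indicator hS]
  congr 1
  refine setLIntegral_congr_fun measurableSet_Ioi fun r hr ↦ ?_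
  by_cases hrS : r ∈ S <;> simp [hrS, power hr]

lemma lintegral_ball_edist_rpow {s : ℝ} (hs : 0 < finrank ℝ E + s) (z : E) {r : ℝ} (hr : 0 ≤ r) :
    ∫⁻ y in ball z r, edist y z ^ s ∂μ =
      ENNReal.ofReal (μ.toSphere.real univ * (r ^ (finrank ℝ E + s) / (finrank ℝ E + s))) := by
  have h := setLIntegral_edist_rpow μ (measurableSet_Iio (a := r)) z s
  rw [Iio_inter_Ioi, lintegral_Ioo_rpow (by linarith) hr, sub_add_eq_add_sub, sub_add_cancel] at h
  rw [ENNReal.ofReal_mul measureReal_nonneg, ofReal_measureReal]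
  exact h

lemma lintegral_compl_ball_edist_rpow {s : ℝ} (hs : finrank ℝ E + s < 0) (z : E) {r : ℝ}
    (hr : 0 < r) :
    ∫⁻ y in (ball z r)ᶜ, edist y z ^ s ∂μ =
      ENNReal.ofReal (μ.toSphere.real univ * (-r ^ (finrank ℝ E + s) / (finrank ℝ E + s))) := by
  have h := setLIntegral_edist_rpow μ (measurableSet_Ici (a := r)) z s
  rw [inter_eq_left.2 (Ici_subset_Ioi.2 hr), lintegral_Ici_rpow (by linarith) hr,
    sub_add_eq_add_sub, sub_add_cancel] at h
  rw [ENNReal.ofReal_mul measureReal_nonneg, ofReal_measureReal, ← h]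
  congr 2
  ext y
  simp

lemma lintegral_ball_half_edist_rpow_mul_edist_rpow_le {s : ℝ} (hs : 0 < finrank ℝ E + s) (t : ℝ)
    {x z : E} (hxz : x ≠ z) :
    ∫⁻ y in ball x (dist x z / 2), edist x y ^ s * edist y z ^ t ∂μ ≤
      ENNReal.ofReal (2 ^ |t| * (μ.toSphere.real univ *
        (2⁻¹ ^ (finrank ℝ E + s) / (finrank ℝ E + s))) * dist x z ^ (finrank ℝ E + s + t)) := by
  have hd : 0 < dist x z := dist_pos.2 hxz
  calc
    _ ≤ ∫⁻ y in ball x (dist x z / 2),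
        ENNReal.ofReal (2 ^ |t|) * edist x z ^ t * edist y x ^ s ∂μ := by
      refine setLIntegral_mono' measurableSet_ball fun y hy ↦ ?_
      rw [edist_comm x y, mul_comm]
      gcongr
      exact edist_rpow_le_of_mem_ball_half hy t
    _ = _ := by
      rw [lintegral_const_mul _ (by fun_prop), lintegral_ball_edist_rpow μ hs x (by positivity),
        edist_dist, ENNReal.ofReal_rpow_of_pos hd, ← ENNReal.ofReal_mul (by positivity),
        ← ENNReal.ofReal_mul (by positivity), div_eq_mul_inv (dist x z),
        Real.mul_rpow hd.le (by positivity), Real.rpow_add hd _ t]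
      congr 1
      ring

lemma lintegral_compl_balls_edist_rpow_mul_edist_rpow_le {s t c : ℝ}
    (hst : finrank ℝ E + s + t < 0) (hc : 0 < c) {x z : E} (hxz : x ≠ z) :
    ∫⁻ y in (ball z (c * dist x z))ᶜ \ ball x (dist x z / 2), edist x y ^ s * edist y z ^ t ∂μ ≤
      ENNReal.ofReal ((3 + c⁻¹) ^ |s| * (μ.toSphere.real univ *
        (-c ^ (finrank ℝ E + s + t) / (finrank ℝ E + s + t))) *
        dist x z ^ (finrank ℝ E + s + t)) := by
  have hd : 0 < dist x z := dist_pos.2 hxz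
  calc
    _ ≤ ∫⁻ y in (ball z (c * dist x z))ᶜ \ ball x (dist x z / 2),
        ENNReal.ofReal ((3 + c⁻¹) ^ |s|) * edist y z ^ (s + t) ∂μ := by
      refine setLIntegral_mono' (measurableSet_ball.compl.diff measurableSet_ball) fun y hy ↦ ?_
      have hyz : y ≠ z := by
        rintro rfl
        exact hy.1 (mem_ball_self (mul_pos hc hd))
      rw [ENNReal.rpow_add _ _ (edist_pos.2 hyz).ne' (edist_ne_top y z), ← mul_assoc]
      gcongr
      exact edist_rpow_le_of_notMem_balls hc hy.2 hy.1 s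
    _ ≤ ∫⁻ y in (ball z (c * dist x z))ᶜ,
        ENNReal.ofReal ((3 + c⁻¹) ^ |s|) * edist y z ^ (s + t) ∂μ :=
      lintegral_mono_set sdiff_subset
    _ = _ := by
      rw [lintegral_const_mul _ (by fun_prop),
        lintegral_compl_ball_edist_rpow μ (by linarith) z (by positivity),
        ← ENNReal.ofReal_mul (by positivity), ← add_assoc, Real.mul_rpow hc.le hd.le]
      congr 1
      ring

end Radial

theorem kernel_estimate_general {s t c : ℝ} (hs : 0 < finrank ℝ E + s)
    (hst : finrank ℝ E + s + t < 0) (hc : 0 < c) :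
    ∃ C > (0 : ℝ), ∀ x z : E, x ≠ z →
      ∫⁻ y in (ball z (c * ‖x - z‖))ᶜ, edist x y ^ s * edist y z ^ t ∂μ ≤
        ENNReal.ofReal (C * ‖x - z‖ ^ (finrank ℝ E + s + t)) := by
  rcases subsingleton_or_nontrivial E with _ | _
  · exact ⟨1, one_pos, fun x z hxz ↦ (hxz (Subsingleton.elim x z)).elim⟩
  have sphere_pos : 0 < μ.toSphere.real univ := by
    have := NeZero.mk μ.toSphere_ne_zero
    exact measureReal_univ_pos
  have tail_pos : 0 < -c ^ (finrank ℝ E + s + t) / (finrank ℝ E + s + t) :=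
    div_pos_of_neg_of_neg (neg_neg_of_pos (by positivity)) hst
  refine ⟨2 ^ |t| * (μ.toSphere.real univ * (2⁻¹ ^ (finrank ℝ E + s) / (finrank ℝ E + s))) +
    (3 + c⁻¹) ^ |s| * (μ.toSphere.real univ *
      (-c ^ (finrank ℝ E + s + t) / (finrank ℝ E + s + t))), by positivity, fun x z hxz ↦ ?_⟩
  rw [add_mul, ENNReal.ofReal_add (by positivity) (by positivity), ← dist_eq_norm,
    ← lintegral_inter_add_sdiff _ _ (measurableSet_ball (x := x) (ε := dist x z / 2))]
  gcongr ?_ + ?_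
  · exact (lintegral_mono_set inter_subset_right).trans
      (lintegral_ball_half_edist_rpow_mul_edist_rpow_le μ hs t hxz)
  · exact lintegral_compl_balls_edist_rpow_mul_edist_rpow_le μ hst hc hxz

end AddHaar

/-- Convolution-type kernel estimate: for `R > 0` and `p ∈ {1,2,3}` there is `C > 0` such
that for all distinct `x, z` in the closed ball of radius `R` of `ℝ⁴`,
`∫_{B_R(0) ∖ B_{‖x−z‖/2}(z)} ‖x−y‖^{−p} ‖y−z‖^{−4} dy ≤ C ‖x−z‖^{−p}`. -/
theorem kernel_estimate (R : ℝ) (hR : 0 < R) (p : ℕ) (hp : p = 1 ∨ p = 2 ∨ p = 3) :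
    ∃ C > (0:ℝ), ∀ x ∈ closedBall (0 : EuclideanSpace ℝ (Fin 4)) R,
      ∀ z ∈ closedBall (0 : EuclideanSpace ℝ (Fin 4)) R, x ≠ z →
        ∫⁻ y in (ball (0 : EuclideanSpace ℝ (Fin 4)) R \ ball z (‖x - z‖ / 2)),
            (edist x y) ^ (-(p:ℝ)) * (edist y z) ^ (-(4:ℝ))
          ≤ ENNReal.ofReal (C * ‖x - z‖ ^ (-(p:ℝ))) := by
  have hp_mem : (p : ℝ) ∈ Ioo 0 4 := by rcases hp with rfl | rfl | rfl <;> norm_num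
  obtain ⟨C, hC, bound⟩ := kernel_estimate_general
    (volume : Measure (EuclideanSpace ℝ (Fin 4))) (s := -p) (t := -4)
    (by simpa using hp_mem.2) (by simpa using hp_mem.1) one_half_pos
  refine ⟨C, hC, fun x _ z _ hxz ↦ (lintegral_mono_set (sdiff_subset_compl _ _)).trans ?_⟩
  simpa [div_eq_inv_mul] using bound x z hxz
end
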